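/- arXiv:2308.09774 — 2 statements merged into one kernel-verified Lean document; each statement's English description precedes it below -/
import Mathlib

section
/- Let φ = (1+√5)/2 and let v be a real number with 1 + 3v + 4v² + 2v³ + v⁴ ≠ 0. Set w = v·(1 − 2v + 4v² − 3v³ + v⁴)/(1 + 3v + 4v² + 2v³ + v⁴). Then (1 − φ⁵·w)·(φ + v)⁵ = (φ⁵ + w)·(1 − φ·v)⁵. (Equivalently: if u⁵ = w, then ((1 − φv)/(φ + v))⁵ = (1 − φ⁵u⁵)/(φ⁵ + u⁵), which is the Chan–Cooper–Liaw inversion of Ramanujan's modular equation relating u = R(q) and v = R(q⁵).) -/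
theorem stmt_7 (v : ℝ) (hv : 1 + 3 * v + 4 * v ^ 2 + 2 * v ^ 3 + v ^ 4 ≠ 0) :
    let φ : ℝ := (1 + Real.sqrt 5) / 2
    let w : ℝ := v * (1 - 2 * v + 4 * v ^ 2 - 3 * v ^ 3 + v ^ 4) /
      (1 + 3 * v + 4 * v ^ 2 + 2 * v ^ 3 + v ^ 4)
    (1 - φ ^ 5 * w) * (φ + v) ^ 5 = (φ ^ 5 + w) * (1 - φ * v) ^ 5 := by
  intro φ w
  have h2 : φ ^ 2 = φ + 1 := by
    have h := Real.sq_sqrt (show (0 : ℝ) ≤ 5 by norm_num)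
    simp only [φ]
    linear_combination h / 4
  have hw : w * (1 + 3 * v + 4 * v ^ 2 + 2 * v ^ 3 + v ^ 4) =
      v * (1 - 2 * v + 4 * v ^ 2 - 3 * v ^ 3 + v ^ 4) := div_mul_cancel₀ _ hv
  clear_value φ w
  have h3 : φ ^ 3 = 2 * φ + 1 := by linear_combination (φ + 1) * h2
  have h4 : φ ^ 4 = 3 * φ + 2 := by linear_combination φ * h3 + 2 * h2
  have h5 : φ ^ 5 = 5 * φ + 3 := by linear_combination φ * h4 + 3 * h2
  have e1 : (φ + v) ^ 5 = (5 * φ + 3) + 5 * (3 * φ + 2) * v + 10 * (2 * φ + 1) * v ^ 2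
      + 10 * (φ + 1) * v ^ 3 + 5 * φ * v ^ 4 + v ^ 5 := by
    rw [← h5, ← h4, ← h3, ← h2]; ring
  have e2 : (1 - φ * v) ^ 5 = 1 - 5 * φ * v + 10 * (φ + 1) * v ^ 2 - 10 * (2 * φ + 1) * v ^ 3
      + 5 * (3 * φ + 2) * v ^ 4 - (5 * φ + 3) * v ^ 5 := by
    rw [← h5, ← h4, ← h3, ← h2]; ring
  rw [e1, e2, h5]
  apply mul_right_cancel₀ hv
  grind
end

section
/- Let φ = (1+√5)/2 and u = √(φ² + 1) − φ. Then (1 − φ⁵·u⁵)/(φ⁵ + u⁵) = 3·(√(φ² + 1) − 1) − φ². -/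
theorem stmt_8 :
    let φ : ℝ := (1 + Real.sqrt 5) / 2
    let u : ℝ := Real.sqrt (φ ^ 2 + 1) - φ
    (1 - φ ^ 5 * u ^ 5) / (φ ^ 5 + u ^ 5) = 3 * (Real.sqrt (φ ^ 2 + 1) - 1) - φ ^ 2 := by
  intro φ u
  have h5 : Real.sqrt 5 ^ 2 = 5 := Real.sq_sqrt (by norm_num)
  have hφ : φ ^ 2 = φ + 1 := by
    simp only [φ]
    linarith
  have hpos : 0 < φ := by
    simp only [φ]
    positivity
  have hs : Real.sqrt (φ ^ 2 + 1) ^ 2 = φ ^ 2 + 1 := Real.sq_sqrt (by positivity)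
  have hle : φ ≤ Real.sqrt (φ ^ 2 + 1) := Real.le_sqrt_of_sq_le (by linarith)
  have hu : 0 ≤ u := by
    simp only [u]
    linarith
  have hne : φ ^ 5 + u ^ 5 ≠ 0 := by positivity
  rw [div_eq_iff hne]
  have hu' : u = Real.sqrt (φ ^ 2 + 1) - φ := rfl
  clear_value u
  generalize Real.sqrt (φ ^ 2 + 1) = s at *
  clear_value φ
  have hs2 : s ^ 2 = φ + 2 := by linarith
  have hp5 : φ ^ 5 = 5 * φ + 3 := by grind
  have hu5 : u ^ 5 = (60 * φ + 45) * s - (125 * φ + 68) := by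
    subst hu'
    grind
  rw [hp5, hu5, hφ]
  grind
end
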